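/- If the set F of function symbols is finite and the rewriting system R is size-change terminating, then the call relation ≻̃ terminates on ℂ: there is no infinite sequence f₁ t⃗₁ ≻̃ f₂ t⃗₂ ≻̃ … in ℂ. -/

import Mathlib

set_option maxHeartbeats 1000000

/-! # Terms of λΠ/R (de Bruijn representation) -/

inductive Trm (F : Type) : Type
  | type : Trm F
  | kind : Trm F
  | var : ℕ → Trm F
  | sym : F → Trm F
  | pi : Trm F → Trm F → Trm F
  | app : Trm F → Trm F → Trm F
  | lam : Trm F → Trm F → Trm F

namespace Trm

variable {F : Type}

/-- Lifting of a renaming under a binder. -/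
def upRen (ρ : ℕ → ℕ) : ℕ → ℕ
  | 0 => 0
  | n + 1 => ρ n + 1

/-- Renaming of (de Bruijn) variables. -/
def rename (ρ : ℕ → ℕ) : Trm F → Trm F
  | .type => .type
  | .kind => .kind
  | .var n => .var (ρ n)
  | .sym f => .sym f
  | .pi A B => .pi (rename ρ A) (rename (upRen ρ) B)
  | .app t u => .app (rename ρ t) (rename ρ u)
  | .lam A b => .lam (rename ρ A) (rename (upRen ρ) b)

/-- Lifting of a substitution under a binder. -/
def up (σ : ℕ → Trm F) : ℕ → Trm F
  | 0 => .var 0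
  | n + 1 => rename Nat.succ (σ n)

/-- Capture-avoiding (parallel) substitution. -/
def subst (σ : ℕ → Trm F) : Trm F → Trm F
  | .type => .type
  | .kind => .kind
  | .var n => σ n
  | .sym f => .sym f
  | .pi A B => .pi (subst σ A) (subst (up σ) B)
  | .app t u => .app (subst σ t) (subst σ u)
  | .lam A b => .lam (subst σ A) (subst (up σ) b)

/-- Cons of a term on a substitution: `scons a σ` maps `0` to `a` and `n+1` to `σ n`. -/
def scons (a : Trm F) (σ : ℕ → Trm F) : ℕ → Trm F
  | 0 => a
  | n + 1 => σ n

/-- Substitution of the first free variable: `t[x ↦ a]`. -/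
def subst1 (a t : Trm F) : Trm F := subst (scons a .var) t

/-- Shifting of all free variables. -/
def shift : Trm F → Trm F := rename Nat.succ

/-- Application of a head term to a list of arguments: `appList h [t1,…,tn] = h t1 … tn`. -/
def appList (h : Trm F) : List (Trm F) → Trm F
  | [] => h
  | a :: as => appList (.app h a) as

/-- Free (de Bruijn) variables of a term. -/
def FV : Trm F → Set ℕ
  | .type => ∅
  | .kind => ∅
  | .var n => {n}
  | .sym _ => ∅
  | .pi A B => FV A ∪ {n | n + 1 ∈ FV B}
  | .app t u => FV t ∪ FV u
  | .lam A b => FV A ∪ {n | n + 1 ∈ FV b}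

/-- The class 𝕂 of kinds: `K = TYPE | Πx:t.K`. -/
def IsKind : Trm F → Prop
  | .type => True
  | .pi _ B => IsKind B
  | _ => False

/-- Sorts: `TYPE` and `KIND`. -/
def IsSort (s : Trm F) : Prop := s = .type ∨ s = .kind

/-- The product arity of a term: the number of leading products. -/
def piArity : Trm F → ℕ
  | .pi _ B => piArity B + 1
  | _ => 0

/-- Strip `n` leading products. -/
def piCodN : ℕ → Trm F → Trm F
  | 0, T => T
  | n + 1, .pi _ B => piCodN n B
  | _ + 1, T => T

/-- The first `n` domains of the leading products, as a de Bruijn context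
(type of variable `0` first, i.e. innermost first). -/
def teleN : ℕ → Trm F → List (Trm F)
  | 0, _ => []
  | n + 1, .pi A B => teleN n B ++ [A]
  | _ + 1, _ => []

/-- The full telescope of leading products, as a de Bruijn context. -/
def telescope (T : Trm F) : List (Trm F) := teleN (piArity T) T

/-- The domains of the leading products, outermost first. -/
def piDoms : Trm F → List (Trm F)
  | .pi A B => A :: piDoms B
  | _ => []

end Trm

/-- The subterm relation (reflexive and transitive). -/
inductive Subterm {F : Type} : Trm F → Trm F → Prop
  | refl (t : Trm F) : Subterm t t
  | piL {t A B} : Subterm t A → Subterm t (.pi A B)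
  | piR {t A B} : Subterm t B → Subterm t (.pi A B)
  | appL {t u v} : Subterm t u → Subterm t (.app u v)
  | appR {t u v} : Subterm t v → Subterm t (.app u v)
  | lamL {t A b} : Subterm t A → Subterm t (.lam A b)
  | lamR {t A b} : Subterm t b → Subterm t (.lam A b)

/-! # Rewriting -/

/-- A set of rewriting rules `l → r`. -/
abbrev Rules (F : Type) := Set (Trm F × Trm F)

/-- `R` is a rewriting system: for every rule `l → r`, `FV(r) ⊆ FV(l)` and
`l` is of the form `f l⃗`. -/
def IsRewriteSystem {F : Type} (R : Rules F) : Prop :=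
  ∀ p ∈ R, Trm.FV p.2 ⊆ Trm.FV p.1 ∧ ∃ (f : F) (ls : List (Trm F)), p.1 = Trm.appList (.sym f) ls

/-- A symbol is defined if it heads the left-hand side of some rule. -/
def Defined {F : Type} (R : Rules F) (f : F) : Prop :=
  ∃ (ls : List (Trm F)) (r : Trm F), (Trm.appList (.sym f) ls, r) ∈ R

/-- One-step reduction `→ = →β ∪ →R`: β-reduction together with the closure of the
rules of `R` by substitution and context. -/
inductive Red {F : Type} (R : Rules F) : Trm F → Trm F → Prop
  | beta (A b a : Trm F) : Red R (.app (.lam A b) a) (Trm.subst1 a b)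
  | rule {l r : Trm F} (σ : ℕ → Trm F) : (l, r) ∈ R → Red R (Trm.subst σ l) (Trm.subst σ r)
  | appL {t t' u} : Red R t t' → Red R (.app t u) (.app t' u)
  | appR {t u u'} : Red R u u' → Red R (.app t u) (.app t u')
  | piL {A A' B} : Red R A A' → Red R (.pi A B) (.pi A' B)
  | piR {A B B'} : Red R B B' → Red R (.pi A B) (.pi A B')
  | lamL {A A' b} : Red R A A' → Red R (.lam A b) (.lam A' b)
  | lamR {A b b'} : Red R b b' → Red R (.lam A b) (.lam A b')

/-- Multi-step reduction `→*`. -/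
def RedStar {F : Type} (R : Rules F) : Trm F → Trm F → Prop := Relation.ReflTransGen (Red R)

/-- Joinability `↓`. -/
def Joinable {F : Type} (R : Rules F) (t u : Trm F) : Prop :=
  ∃ v, RedStar R t v ∧ RedStar R u v

/-- Local confluence: `← · → ⊆ →* · *←`. -/
def LocallyConfluent {F : Type} (R : Rules F) : Prop :=
  ∀ t u v, Red R t u → Red R t v → Joinable R u v

/-- `t` is strongly normalizing (terminating): no infinite reduction sequence from `t`. -/
def SN {F : Type} (R : Rules F) (t : Trm F) : Prop := Acc (fun a b => Red R b a) t

/-- The set of strongly normalizing terms. -/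
def SNset {F : Type} (R : Rules F) : Set (Trm F) := {t | SN R t}

/-- `t` is in normal form. -/
def NormalForm {F : Type} (R : Rules F) (t : Trm F) : Prop := ∀ u, ¬ Red R t u

/-- Neutral terms: `(λx:A.t)u v⃗`, `x v⃗`, or `f v⃗` where every rule `f l⃗ → r ∈ R`
satisfies `|l⃗| ≤ |v⃗|`. -/
def Neutral {F : Type} (R : Rules F) (t : Trm F) : Prop :=
  (∃ (A b a : Trm F) (vs : List (Trm F)), t = Trm.appList (.app (.lam A b) a) vs) ∨
  (∃ (x : ℕ) (vs : List (Trm F)), t = Trm.appList (.var x) vs) ∨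
  (∃ (f : F) (vs : List (Trm F)), t = Trm.appList (.sym f) vs ∧
    ∀ (ls : List (Trm F)) (r : Trm F), (Trm.appList (.sym f) ls, r) ∈ R → ls.length ≤ vs.length)

/-- Computability predicates: `S ⊆ SN`, `S` is closed under reduction, and `S` contains
every neutral term all of whose one-step reducts are in `S`. -/
def IsCompPred {F : Type} (R : Rules F) (S : Set (Trm F)) : Prop :=
  S ⊆ SNset R ∧ (∀ t ∈ S, ∀ u, Red R t u → u ∈ S) ∧
  (∀ t, Neutral R t → (∀ u, Red R t u → u ∈ S) → t ∈ S)

/-! # Typing: λP extended with function symbols and conversion modulo `→` -/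

/-- The typing rules of λΠ/R: the rules of λP (in de Bruijn presentation) with the extra
rule (fun) `⊢ f : Θ_f` and conversion up to joinability for `→`. -/
inductive Typing {F : Type} (R : Rules F) (Θ sΘ : F → Trm F) :
    List (Trm F) → Trm F → Trm F → Prop
  | ax : Typing R Θ sΘ [] .type .kind
  | var {Γ A s} : Trm.IsSort s → Typing R Θ sΘ Γ A s →
      Typing R Θ sΘ (A :: Γ) (.var 0) (Trm.shift A)
  | weak {Γ A s b B} : Trm.IsSort s → Typing R Θ sΘ Γ A s → Typing R Θ sΘ Γ b B →
      Typing R Θ sΘ (A :: Γ) (Trm.shift b) (Trm.shift B)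
  | prod {Γ A B s} : Trm.IsSort s → Typing R Θ sΘ Γ A .type → Typing R Θ sΘ (A :: Γ) B s →
      Typing R Θ sΘ Γ (.pi A B) s
  | abs {Γ A b B s} : Trm.IsSort s → Typing R Θ sΘ (A :: Γ) b B →
      Typing R Θ sΘ Γ (.pi A B) s → Typing R Θ sΘ Γ (.lam A b) (.pi A B)
  | app {Γ t a A B} : Typing R Θ sΘ Γ t (.pi A B) → Typing R Θ sΘ Γ a A →
      Typing R Θ sΘ Γ (.app t a) (Trm.subst1 a B)
  | conv {Γ a A B s} : Typing R Θ sΘ Γ a A → Joinable R A B → Typing R Θ sΘ Γ B s →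
      Trm.IsSort s → Typing R Θ sΘ Γ a B
  | symb (f : F) : Trm.IsSort (sΘ f) → Typing R Θ sΘ [] (Θ f) (sΘ f) →
      Typing R Θ sΘ [] (.sym f) (Θ f)

/-- `→` preserves typing (subject reduction). -/
def PresTyping {F : Type} (R : Rules F) (Θ sΘ : F → Trm F) : Prop :=
  ∀ Γ t u T, Typing R Θ sΘ Γ t T → Red R t u → Typing R Θ sΘ Γ u T

/-- A substitution `γ` is well-typed from `Δ` to `Γ` (for a generic typing judgment `Ty`):
for all `(x : T) ∈ Δ`, `Ty Γ (xγ) (Tγ)`. -/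
def SubstTyped {F : Type} (Ty : List (Trm F) → Trm F → Trm F → Prop)
    (Γ : List (Trm F)) (γ : ℕ → Trm F) (Δ : List (Trm F)) : Prop :=
  ∀ i A, Δ[i]? = some A → Ty Γ (γ i) (Trm.subst (fun j => γ (j + i + 1)) A)

/-! # Interpretation of types as computability predicates -/

/-- `𝕀`: partial functions from terms to sets of terms. -/
abbrev Interp (F : Type) := Trm F → Part (Set (Trm F))

/-- Graph inclusion of partial functions. -/
def InterpLE {F : Type} (I J : Interp F) : Prop := ∀ T S, S ∈ I T → S ∈ J T

/-- `I` is the least fixpoint of `φ` on `𝕀` (ordered by graph inclusion). -/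
def IsLfpInterp {F : Type} (φ : Interp F → Interp F) (I : Interp F) : Prop :=
  φ I = I ∧ ∀ J, φ J = J → InterpLE I J

/-- The domain `D(I)`: terminating terms `T` such that whenever `T →* Πx:A.B`,
`A ∈ dom(I)` and `B[x↦a] ∈ dom(I)` for all `a ∈ I(A)`. -/
def domD {F : Type} (R : Rules F) (I : Interp F) : Set (Trm F) :=
  {T | SN R T ∧ ∀ A B, RedStar R T (.pi A B) →
    (I A).Dom ∧ ∀ S ∈ I A, ∀ a ∈ S, (I (Trm.subst1 a B)).Dom}

/-- `{t | ∀ a ∈ I(A), t a ∈ I(B[x↦a])}` (relational reading of the partial function `I`). -/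
def piPart {F : Type} (I : Interp F) (A B : Trm F) : Set (Trm F) :=
  {t | ∀ S ∈ I A, ∀ a ∈ S, ∀ S' ∈ I (Trm.subst1 a B), Trm.app t a ∈ S'}

open Classical in
/-- The monotone function `F : 𝕀 → 𝕀`: `dom(F(I)) = D(I)`; `F(I)(T) = SN` if the normal
form of `T` is not a product; `F(I)(T) = {t | ∀ a ∈ I(A), t a ∈ I(B[x↦a])}` if the normal
form of `T` is `Πx:A.B`. -/
noncomputable def interpF {F : Type} (R : Rules F) (I : Interp F) : Interp F := fun T =>
  ⟨T ∈ domD R I, fun _ =>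
    if h : ∃ A B, RedStar R T (.pi A B) ∧ NormalForm R (.pi A B) then
      piPart I h.choose h.choose_spec.choose
    else SNset R⟩

/-- The value of a partial interpretation at `T` (as a set). -/
def partMem {F : Type} (I : Interp F) (T : Trm F) : Set (Trm F) := {t | ∀ S ∈ I T, t ∈ S}

open Classical in
/-- The interpretation `⟦T⟧σ` of a term `T` wrt a substitution `σ`, relative to the least
fixpoint `I = ℐ` of `interpF`: `⟦s⟧σ = 𝒟` for `s` a sort;
`⟦Πx:A.K⟧σ = {t | ∀ a ∈ ⟦A⟧σ, t a ∈ ⟦K⟧[x↦a,σ]}` for `K` a kind;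
`⟦T⟧σ = ℐ(Tσ)` if `T` is neither a kind nor `KIND` and `Tσ ∈ 𝒟`; `⟦T⟧σ = SN` otherwise. -/
noncomputable def interp {F : Type} (R : Rules F) (I : Interp F) :
    Trm F → (ℕ → Trm F) → Set (Trm F)
  | .type, _ => domD R I
  | .kind, _ => domD R I
  | .pi A B, σ =>
      if Trm.IsKind B then
        {t | ∀ a ∈ interp R I A σ, Trm.app t a ∈ interp R I B (Trm.scons a σ)}
      else if Trm.subst σ (.pi A B) ∈ domD R I then partMem I (Trm.subst σ (.pi A B))
      else SNset R
  | .var n, σ =>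
      if Trm.subst σ (.var n) ∈ domD R I then partMem I (Trm.subst σ (.var n)) else SNset R
  | .sym g, σ =>
      if Trm.subst σ (.sym g) ∈ domD R I then partMem I (Trm.subst σ (.sym g)) else SNset R
  | .app t u, σ =>
      if Trm.subst σ (.app t u) ∈ domD R I then partMem I (Trm.subst σ (.app t u)) else SNset R
  | .lam A b, σ =>
      if Trm.subst σ (.lam A b) ∈ domD R I then partMem I (Trm.subst σ (.lam A b)) else SNset R

/-- `σ ⊨ Γ`: a substitution is adequate wrt an environment. -/
def Models {F : Type} (R : Rules F) (I : Interp F) (σ : ℕ → Trm F) (Γ : List (Trm F)) : Prop :=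
  ∀ i A, Γ[i]? = some A → σ i ∈ interp R I A (fun j => σ (j + i + 1))

/-- The typing map `Θ` is adequate: `f ∈ ⟦Θ_f⟧` whenever `⊢ Θ_f : s_f` and `Θ_f ∈ ⟦s_f⟧`. -/
def Adequate {F : Type} (R : Rules F) (Θ sΘ : F → Trm F) (I : Interp F) : Prop :=
  ∀ f : F, Typing R Θ sΘ [] (Θ f) (sΘ f) → Θ f ∈ interp R I (sΘ f) Trm.var →
    Trm.sym f ∈ interp R I (Θ f) Trm.var

/-- The substitution `[x⃗ ↦ l⃗]` (where `ls` lists the images of variables `0, 1, …`). -/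
def mkSubst {F : Type} (ls : List (Trm F)) : ℕ → Trm F := fun i =>
  (ls[i]?).getD (.var (i - ls.length))

/-- Composition of substitutions: `x ↦ (xγ)σ`. -/
def compSubst {F : Type} (γ σ : ℕ → Trm F) : ℕ → Trm F := fun i => Trm.subst σ (γ i)

/-- The set `ℂ` of terms `f t⃗` with `|t⃗| = arit(Θ_f)`, `⊢ Θ_f : s_f`, `Θ_f ∈ ⟦s_f⟧` and
`[x⃗↦t⃗] ⊨ Γ_f`. -/
def CC {F : Type} (R : Rules F) (Θ sΘ : F → Trm F) (I : Interp F) : Set (Trm F) :=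
  {t | ∃ (f : F) (ts : List (Trm F)), t = Trm.appList (.sym f) ts ∧
    ts.length = Trm.piArity (Θ f) ∧
    Typing R Θ sΘ [] (Θ f) (sΘ f) ∧ Θ f ∈ interp R I (sΘ f) Trm.var ∧
    Models R I (mkSubst ts.reverse) (Trm.telescope (Θ f))}

/-! # Dependency pairs -/

/-- Occurrences of `p` in a term, not at the root, such that `p` is not further applied
(i.e. `p` collects all the arguments of its head at this occurrence). -/
inductive MaxOccNR {F : Type} (p : Trm F) : Trm F → Prop
  | appL {u v} : MaxOccNR p u → MaxOccNR p (.app u v)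
  | appR {u v} : MaxOccNR p v → MaxOccNR p (.app u v)
  | appRroot {u} : MaxOccNR p (.app u p)
  | piL {A B} : MaxOccNR p A → MaxOccNR p (.pi A B)
  | piLroot {B} : MaxOccNR p (.pi p B)
  | piR {A B} : MaxOccNR p B → MaxOccNR p (.pi A B)
  | piRroot {A} : MaxOccNR p (.pi A p)
  | lamL {A b} : MaxOccNR p A → MaxOccNR p (.lam A b)
  | lamLroot {b} : MaxOccNR p (.lam p b)
  | lamR {A b} : MaxOccNR p b → MaxOccNR p (.lam A b)
  | lamRroot {A} : MaxOccNR p (.lam A p)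

/-- `p` occurs in `t` as a maximal application. -/
def MaxOcc {F : Type} (p t : Trm F) : Prop := t = p ∨ MaxOccNR p t

/-- Dependency pairs: `f l⃗ > g m⃗` iff there is a rule `f l⃗ → r ∈ R`, `g` is defined and
`g m⃗` is a subterm of `r` such that `m⃗` are all the arguments to which `g` is applied. -/
def DepPair {F : Type} (R : Rules F) (f : F) (ls : List (Trm F)) (g : F)
    (ms : List (Trm F)) : Prop :=
  Defined R g ∧ ∃ r, (Trm.appList (.sym f) ls, r) ∈ R ∧ MaxOcc (Trm.appList (.sym g) ms) r

/-- `f t⃗ →arg f u⃗`: reduction of exactly one argument. -/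
def ArgRed {F : Type} (R : Rules F) (t u : Trm F) : Prop :=
  ∃ (f : F) (pre post : List (Trm F)) (a b : Trm F), Red R a b ∧
    t = Trm.appList (.sym f) (pre ++ a :: post) ∧ u = Trm.appList (.sym f) (pre ++ b :: post)

/-- `>ₛ`: the closure of the dependency pair relation by substitution and left-application:
`f t₁…t_p >ₛ g u₁…u_q` iff there are a dependency pair `f l₁…l_i > g m₁…m_j` with `i ≤ p`
and `j ≤ q` and a substitution `σ` such that `t_k →* l_kσ` for `k ≤ i` and `m_kσ = u_k`
for `k ≤ j`. -/
def GTsub {F : Type} (R : Rules F) (t u : Trm F) : Prop :=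
  ∃ (f g : F) (ts us ls ms : List (Trm F)) (σ : ℕ → Trm F),
    t = Trm.appList (.sym f) ts ∧ u = Trm.appList (.sym g) us ∧
    DepPair R f ls g ms ∧ ls.length ≤ ts.length ∧ ms.length ≤ us.length ∧
    (∀ (k : ℕ) (tk lk : Trm F), ts[k]? = some tk → ls[k]? = some lk → RedStar R tk (Trm.subst σ lk)) ∧
    (∀ (k : ℕ) (mk : Trm F), ms[k]? = some mk → us[k]? = some (Trm.subst σ mk))

/-- The call relation `≻̃ = →arg* · >ₛ` on `ℂ`. -/
def CallRel {F : Type} (R : Rules F) (Θ sΘ : F → Trm F) (I : Interp F) (t u : Trm F) : Prop :=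
  t ∈ CC R Θ sΘ I ∧ u ∈ CC R Θ sΘ I ∧
    ∃ v, Relation.ReflTransGen (ArgRed R) t v ∧ GTsub R v u

/-! # Precedence and well-structured systems -/

/-- `f ⪰ g` (one step): `g` occurs in `Θ_f` or in the right-hand side of a rule of `f`. -/
def PrecBase {F : Type} (R : Rules F) (Θ : F → Trm F) (f g : F) : Prop :=
  Subterm (.sym g) (Θ f) ∨
  ∃ (ls : List (Trm F)) (r : Trm F), (Trm.appList (.sym f) ls, r) ∈ R ∧ Subterm (.sym g) r

/-- `⪰`: the smallest quasi-order containing `PrecBase`. -/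
def Preceq {F : Type} (R : Rules F) (Θ : F → Trm F) : F → F → Prop :=
  Relation.ReflTransGen (PrecBase R Θ)

/-- `≻`: the strict part of `⪰`. -/
def Prec {F : Type} (R : Rules F) (Θ : F → Trm F) (f g : F) : Prop :=
  Preceq R Θ f g ∧ ¬ Preceq R Θ g f

/-- The restricted type system `⊢_{≺ f}`: as `Typing`, but function symbols may only be
introduced when strictly smaller than `f` in the precedence. -/
inductive LTyp {F : Type} (R : Rules F) (Θ sΘ : F → Trm F) (f : F) :
    List (Trm F) → Trm F → Trm F → Prop
  | ax : LTyp R Θ sΘ f [] .type .kind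
  | var {Γ A s} : Trm.IsSort s → LTyp R Θ sΘ f Γ A s →
      LTyp R Θ sΘ f (A :: Γ) (.var 0) (Trm.shift A)
  | weak {Γ A s b B} : Trm.IsSort s → LTyp R Θ sΘ f Γ A s → LTyp R Θ sΘ f Γ b B →
      LTyp R Θ sΘ f (A :: Γ) (Trm.shift b) (Trm.shift B)
  | prod {Γ A B s} : Trm.IsSort s → LTyp R Θ sΘ f Γ A .type → LTyp R Θ sΘ f (A :: Γ) B s →
      LTyp R Θ sΘ f Γ (.pi A B) s
  | abs {Γ A b B s} : Trm.IsSort s → LTyp R Θ sΘ f (A :: Γ) b B →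
      LTyp R Θ sΘ f Γ (.pi A B) s → LTyp R Θ sΘ f Γ (.lam A b) (.pi A B)
  | app {Γ t a A B} : LTyp R Θ sΘ f Γ t (.pi A B) → LTyp R Θ sΘ f Γ a A →
      LTyp R Θ sΘ f Γ (.app t a) (Trm.subst1 a B)
  | conv {Γ a A B s} : LTyp R Θ sΘ f Γ a A → Joinable R A B → LTyp R Θ sΘ f Γ B s →
      Trm.IsSort s → LTyp R Θ sΘ f Γ a B
  | symb (g : F) : Prec R Θ f g → Trm.IsSort (sΘ g) → LTyp R Θ sΘ f [] (Θ g) (sΘ g) →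
      LTyp R Θ sΘ f [] (.sym g) (Θ g)

/-- The arguments `y⃗γ = [y₁γ, …, y_jγ]` of an instantiated dependency pair right-hand
side, where `y_j` is de Bruijn variable `0`. -/
def dpArgs {F : Type} (γ : ℕ → Trm F) (j : ℕ) : List (Trm F) :=
  (List.range j).reverse.map γ

/-- The restricted type system `⊢_{f l⃗}` (computability closure): as `Typing`, except that
types are required to be typable using symbols smaller than `f` only, and function symbols
are introduced either as undefined constants or through instances of dependency pairs of
`f l⃗`. -/
inductive RTyp {F : Type} (R : Rules F) (Θ sΘ : F → Trm F) (f : F) (ls : List (Trm F)) :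
    List (Trm F) → Trm F → Trm F → Prop
  | ax : RTyp R Θ sΘ f ls [] .type .kind
  | var {Γ A s} : Trm.IsSort s → LTyp R Θ sΘ f Γ A s →
      RTyp R Θ sΘ f ls (A :: Γ) (.var 0) (Trm.shift A)
  | weak {Γ A s b B} : Trm.IsSort s → LTyp R Θ sΘ f Γ A s → RTyp R Θ sΘ f ls Γ b B →
      RTyp R Θ sΘ f ls (A :: Γ) (Trm.shift b) (Trm.shift B)
  | prod {Γ A B s} : Trm.IsSort s → RTyp R Θ sΘ f ls Γ A .type →
      RTyp R Θ sΘ f ls (A :: Γ) B s → RTyp R Θ sΘ f ls Γ (.pi A B) s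
  | abs {Γ A b B s} : Trm.IsSort s → RTyp R Θ sΘ f ls (A :: Γ) b B →
      LTyp R Θ sΘ f Γ (.pi A B) s → RTyp R Θ sΘ f ls Γ (.lam A b) (.pi A B)
  | app {Γ t a A B s} : Trm.IsSort s → RTyp R Θ sΘ f ls Γ t (.pi A B) →
      RTyp R Θ sΘ f ls Γ a A → LTyp R Θ sΘ f Γ (.pi A B) s →
      RTyp R Θ sΘ f ls Γ (.app t a) (Trm.subst1 a B)
  | conv {Γ a A B s s'} : Trm.IsSort s → Trm.IsSort s' → RTyp R Θ sΘ f ls Γ a A →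
      Joinable R A B → LTyp R Θ sΘ f Γ B s → LTyp R Θ sΘ f Γ A s' →
      RTyp R Θ sΘ f ls Γ a B
  | dp {Γ : List (Trm F)} (g : F) (γ : ℕ → Trm F) (j : ℕ) :
      j ≤ Trm.piArity (Θ g) → Trm.IsSort (sΘ g) → LTyp R Θ sΘ f [] (Θ g) (sΘ g) →
      (∀ i A, (Trm.teleN j (Θ g))[i]? = some A →
        RTyp R Θ sΘ f ls Γ (γ i) (Trm.subst (fun k => γ (k + i + 1)) A)) →
      DepPair R f ls g (dpArgs γ j) →
      RTyp R Θ sΘ f ls Γ (Trm.appList (.sym g) (dpArgs γ j)) (Trm.subst γ (Trm.piCodN j (Θ g)))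
  | const (g : F) : ¬ Defined R g → Trm.IsSort (sΘ g) → LTyp R Θ sΘ f [] (Θ g) (sΘ g) →
      RTyp R Θ sΘ f ls [] (.sym g) (Θ g)

/-- `R` is well-structured (wrt the assignment `Δ` of an environment to every rule):
(a) `≻` is well-founded; (b) `|l⃗| ≤ arit(Θ_f)` for every rule `f l⃗ → r`;
(c) `|m⃗| ≤ arit(Θ_g)` for every dependency pair `f l⃗ > g m⃗`;
(d) `Δ_{f l⃗→r} ⊢_{f l⃗} r : U[x⃗↦l⃗]` for every rule `f l⃗ → r`, where `Θ_f = Πx⃗:T⃗.U`. -/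
def WellStructured {F : Type} (R : Rules F) (Θ sΘ : F → Trm F)
    (Δ : Trm F → Trm F → List (Trm F)) : Prop :=
  WellFounded (fun g f => Prec R Θ f g) ∧
  (∀ l r, (l, r) ∈ R → ∀ (f : F) ls, l = Trm.appList (.sym f) ls →
    ls.length ≤ Trm.piArity (Θ f)) ∧
  (∀ (f : F) ls (g : F) ms, DepPair R f ls g ms → ms.length ≤ Trm.piArity (Θ g)) ∧
  (∀ l r, (l, r) ∈ R → ∀ (f : F) ls, l = Trm.appList (.sym f) ls →
    RTyp R Θ sΘ f ls (Δ l r) r (Trm.subst (mkSubst ls.reverse) (Trm.piCodN ls.length (Θ f))))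

/-- `R` is accessible: for every rule `f l⃗ → r` with `Θ_f = Πx⃗:T⃗.U`, `|x⃗| = |l⃗|`, and
every substitution `σ`, `σ ⊨ Δ_{f l⃗→r}` whenever `⊢ Θ_f : s_f`, `Θ_f ∈ ⟦s_f⟧` and
`[x⃗↦l⃗]σ ⊨ x⃗:T⃗`. -/
def Accessible {F : Type} (R : Rules F) (Θ sΘ : F → Trm F) (I : Interp F)
    (Δ : Trm F → Trm F → List (Trm F)) : Prop :=
  ∀ l r, (l, r) ∈ R → ∀ (f : F) ls, l = Trm.appList (.sym f) ls → ∀ σ : ℕ → Trm F,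
    Typing R Θ sΘ [] (Θ f) (sΘ f) → Θ f ∈ interp R I (sΘ f) Trm.var →
    Models R I (compSubst (mkSubst ls.reverse) σ) (Trm.teleN ls.length (Θ f)) →
    Models R I σ (Δ l r)

/-- A term in `𝕂 ∪ {KIND}`. -/
def IsKindLike {F : Type} (t : Trm F) : Prop := Trm.IsKind t ∨ t = .kind

/-- `R` is plain function-passing (PFP): for every rule `f l⃗ → r` with `Θ_f = Πx⃗:T⃗.U` and
`|x⃗| = |l⃗|`, no `l_i` is a kind or `KIND`, and every `(y : T) ∈ Δ_{f l⃗→r}` satisfies: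
either there is `i` with `y = l_i` and `T = T_i[x⃗↦l⃗]`, or `y ∈ FV(l_i)` and `T = D t⃗`
with `D` undefined and `|t⃗| = arit(Θ_D)`. -/
def PFP {F : Type} (R : Rules F) (Θ : F → Trm F) (Δ : Trm F → Trm F → List (Trm F)) : Prop :=
  ∀ l r, (l, r) ∈ R → ∀ (f : F) ls, l = Trm.appList (.sym f) ls →
    (∀ li ∈ ls, ¬ IsKindLike li) ∧
    (∀ i A, (Δ l r)[i]? = some A →
      (∃ (k : ℕ) (Tk : Trm F), ls[k]? = some (Trm.var i) ∧ (Trm.piDoms (Θ f))[k]? = some Tk ∧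
        Trm.rename (fun j => j + i + 1) A = Trm.subst (mkSubst ((ls.take k).reverse)) Tk) ∨
      ((∃ (k : ℕ) (lk : Trm F), ls[k]? = some lk ∧ i ∈ Trm.FV lk) ∧
        ∃ (D : F) (ts : List (Trm F)), Trm.rename (fun j => j + i + 1) A =
          Trm.appList (.sym D) ts ∧ ¬ Defined R D ∧ ts.length = Trm.piArity (Θ D)))

/-! # Size-change termination -/

/-- Entries of size-change matrices: `−1`, `0` or `∞`. -/
inductive SCTe : Type
  | minusOne : SCTe
  | zero : SCTe
  | infty : SCTe
deriving DecidableEq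

/-- Min-plus multiplication of entries (addition, truncated at `−1`). -/
def SCTe.comp : SCTe → SCTe → SCTe
  | .infty, _ => .infty
  | _, .infty => .infty
  | .minusOne, _ => .minusOne
  | _, .minusOne => .minusOne
  | .zero, .zero => .zero

/-- Minimum of entries (`−1 < 0 < ∞`). -/
def SCTe.min : SCTe → SCTe → SCTe
  | .minusOne, _ => .minusOne
  | _, .minusOne => .minusOne
  | .zero, _ => .zero
  | .infty, x => x

/-- Base of the relation `⊵`: `f t₁…t_n ⊵ t_i` for `f ∈ F`. -/
def ArgSubBase {F : Type} (t u : Trm F) : Prop :=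
  ∃ (f : F) (ts : List (Trm F)), t = Trm.appList (.sym f) ts ∧ u ∈ ts

/-- `⊵`: the smallest transitive relation such that `f t₁…t_n ⊵ t_i` for `f ∈ F`. -/
def ArgGT {F : Type} : Trm F → Trm F → Prop := Relation.TransGen ArgSubBase

open Classical in
/-- The size-change matrix of a dependency pair `f l₁…l_p > g m₁…m_q`:
`a_{ij} = −1` if `l_i ⊵ m_j`, `a_{ij} = 0` if `l_i = m_j`, `a_{ij} = ∞` otherwise
(in particular if `i > p` or `j > q`). -/
noncomputable def dpMatrix {F : Type} (ls ms : List (Trm F)) : ℕ → ℕ → SCTe := fun i j =>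
  match ls[i]?, ms[j]? with
  | some li, some mj =>
      if ArgGT li mj then .minusOne else if li = mj then .zero else .infty
  | _, _ => .infty

/-- Min-plus product of matrices, the middle dimension being `d`. -/
def matComp (d : ℕ) (M N : ℕ → ℕ → SCTe) : ℕ → ℕ → SCTe := fun i j =>
  ((List.range d).map fun k => (M i k).comp (N k j)).foldr SCTe.min .infty

/-- The transitive closure of the call graph of `R`: edges are labeled by the matrices of
the dependency pairs, multiplied in the min-plus semiring along paths. -/
inductive TCEdge {F : Type} (R : Rules F) (Θ : F → Trm F) : F → F → (ℕ → ℕ → SCTe) → Prop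
  | base {f g : F} {ls ms : List (Trm F)} : DepPair R f ls g ms →
      TCEdge R Θ f g (dpMatrix ls ms)
  | comp {f g h : F} {M N : ℕ → ℕ → SCTe} : TCEdge R Θ f g M → TCEdge R Θ g h N →
      TCEdge R Θ f h (matComp (Trm.piArity (Θ g)) M N)

/-- `R` is size-change terminating: in the transitive closure of the call graph, every
idempotent matrix labeling a loop has some `−1` on its diagonal. -/
def SCT {F : Type} (R : Rules F) (Θ : F → Trm F) : Prop :=
  ∀ (f : F) (M : ℕ → ℕ → SCTe), TCEdge R Θ f f M → matComp (Trm.piArity (Θ f)) M M = M →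
    ∃ i < Trm.piArity (Θ f), M i i = SCTe.minusOne

/-!
Elements of type interpretations are strongly normalizing, so `ℂ` consists of terms `f t⃗` with
strongly normalizing arguments. The matrix of a dependency pair is sound for every call it
produces: an entry `0` or `−1` says that an argument of the callee is reached from one of the
caller by reductions and passages to an argument, with at least one step if the entry is `−1`. By
Ramsey's theorem an infinite sequence of calls has a subsequence whose segments all compose to one
matrix `M`. This `M` is idempotent, so size-change termination gives it a `−1` on the diagonal,
and the arguments at that position form an infinite descent from a strongly normalizing term.
-/

/-! ### Heads and arguments -/

namespace Trm

variable {F : Type}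

/-- The head of a term: the `h` in `h t₁ … tₙ` with `h` not an application. -/
def head : Trm F → Trm F
  | .app t _ => head t
  | t => t

/-- The arguments to which the head of a term is applied, outermost last. -/
def args : Trm F → List (Trm F)
  | .app t u => args t ++ [u]
  | _ => []

theorem head_appList (t : Trm F) (ts : List (Trm F)) : (appList t ts).head = t.head := by
  induction ts generalizing t with
  | nil => rfl
  | cons u _ ih => exact ih (.app t u)

theorem args_appList (t : Trm F) (ts : List (Trm F)) : (appList t ts).args = t.args ++ ts := by
  induction ts generalizing t with
  | nil => exact (List.append_nil _).symm
  | cons u _ ih => exact (ih (.app t u)).trans (List.append_assoc ..)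

theorem appList_sym_inj {f g : F} {ts us : List (Trm F)} :
    appList (.sym f) ts = appList (.sym g) us ↔ f = g ∧ ts = us := by
  refine ⟨fun h => ⟨?_, ?_⟩, fun ⟨hf, ht⟩ => hf ▸ ht ▸ rfl⟩
  · simpa only [head_appList, head, sym.injEq] using congrArg head h
  · simpa only [args_appList, args, List.nil_append] using congrArg args h

theorem subst_appList (σ : ℕ → Trm F) (t : Trm F) (ts : List (Trm F)) :
    subst σ (appList t ts) = appList (subst σ t) (ts.map (subst σ)) := by
  induction ts generalizing t with
  | nil => rfl
  | cons u _ ih => exact ih (.app t u)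

theorem head_subst_of_head_eq_sym {t : Trm F} {f : F} (h : t.head = .sym f) (σ : ℕ → Trm F) :
    (subst σ t).head = .sym f := by
  induction t with
  | app t u iht _ => exact iht h
  | sym g => exact h
  | _ => cases h

theorem length_telescope (T : Trm F) : (telescope T).length = piArity T := by
  unfold telescope
  induction T with
  | pi A B _ ih => simp only [piArity, teleN, List.length_append, List.length_singleton, ih]
  | _ => rfl

end Trm

/-! ### Reduction and passage to an argument -/

section Descent

variable {F : Type} {R : Rules F}

theorem Subterm.trans {s t u : Trm F} (hst : Subterm s t) (htu : Subterm t u) : Subterm s u := by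
  induction htu with
  | refl => exact hst
  | piL _ ih => exact .piL ih
  | piR _ ih => exact .piR ih
  | appL _ ih => exact .appL ih
  | appR _ ih => exact .appR ih
  | lamL _ ih => exact .lamL ih
  | lamR _ ih => exact .lamR ih

theorem Subterm.sizeOf_le {s t : Trm F} (h : Subterm s t) : sizeOf s ≤ sizeOf t := by
  induction h with
  | refl => exact le_rfl
  | piL _ ih | piR _ ih | appL _ ih | appR _ ih | lamL _ ih | lamR _ ih =>
    simp only [Trm.pi.sizeOf_spec, Trm.app.sizeOf_spec, Trm.lam.sizeOf_spec]
    omega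

theorem Subterm.exists_red {u u' t : Trm F} (hs : Subterm u t) (hr : Red R u u') :
    ∃ t', Red R t t' ∧ Subterm u' t' := by
  induction hs with
  | refl => exact ⟨u', hr, .refl _⟩
  | piL _ ih => exact let ⟨_, h, s⟩ := ih; ⟨_, .piL h, .piL s⟩
  | piR _ ih => exact let ⟨_, h, s⟩ := ih; ⟨_, .piR h, .piR s⟩
  | appL _ ih => exact let ⟨_, h, s⟩ := ih; ⟨_, .appL h, .appL s⟩
  | appR _ ih => exact let ⟨_, h, s⟩ := ih; ⟨_, .appR h, .appR s⟩
  | lamL _ ih => exact let ⟨_, h, s⟩ := ih; ⟨_, .lamL h, .lamL s⟩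
  | lamR _ ih => exact let ⟨_, h, s⟩ := ih; ⟨_, .lamR h, .lamR s⟩

theorem SN.of_subterm {t u : Trm F} (ht : SN R t) (hu : Subterm u t) : SN R u := by
  induction ht generalizing u with
  | intro t _ ih =>
    exact ⟨_, fun u' hr => let ⟨t', ht', hu'⟩ := hu.exists_red hr; ih t' ht' hu'⟩

theorem subterm_appList (t : Trm F) (ts : List (Trm F)) : Subterm t (Trm.appList t ts) := by
  induction ts generalizing t with
  | nil => exact .refl t
  | cons u _ ih => exact (Subterm.appL (.refl t)).trans (ih (.app t u))

theorem exists_app_subterm_appList (t : Trm F) {u : Trm F} {ts : List (Trm F)} (hu : u ∈ ts) :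
    ∃ s, Subterm (.app s u) (Trm.appList t ts) := by
  induction ts generalizing t with
  | nil => cases hu
  | cons v vs ih =>
    rcases List.mem_cons.1 hu with rfl | hu
    · exact ⟨t, subterm_appList (.app t u) vs⟩
    · exact ih (.app t v) hu

theorem ArgSubBase.subterm {t u : Trm F} (h : ArgSubBase t u) : Subterm u t := by
  obtain ⟨f, ts, rfl, hu⟩ := h
  obtain ⟨s, hs⟩ := exists_app_subterm_appList (.sym f) hu
  exact (Subterm.appR (.refl u)).trans hs

theorem ArgSubBase.sizeOf_lt {t u : Trm F} (h : ArgSubBase t u) : sizeOf u < sizeOf t := by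
  obtain ⟨f, ts, rfl, hu⟩ := h
  obtain ⟨s, hs⟩ := exists_app_subterm_appList (.sym f) hu
  have hle := hs.sizeOf_le
  simp only [Trm.app.sizeOf_spec] at hle
  omega

theorem wellFounded_swap_argSubBase : WellFounded (Function.swap (ArgSubBase (F := F))) :=
  Subrelation.wf ArgSubBase.sizeOf_lt (measure sizeOf).wf

theorem ArgGT.subst {t u : Trm F} (h : ArgGT t u) (σ : ℕ → Trm F) :
    ArgGT (Trm.subst σ t) (Trm.subst σ u) := by
  refine Relation.TransGen.lift (Trm.subst σ) ?_ _ _ h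
  rintro _ u ⟨f, ts, rfl, hu⟩
  exact ⟨f, ts.map (Trm.subst σ), Trm.subst_appList σ (.sym f) ts, List.mem_map_of_mem hu⟩

/-- One step of descent: a reduction, or the passage from `f t⃗` to one of the `tᵢ`. Size-change
matrices bound the arguments of a callee by those of the caller in this relation. -/
def Descent (R : Rules F) (t u : Trm F) : Prop := Red R t u ∨ ArgSubBase t u

theorem RedStar.descent {t u : Trm F} (h : RedStar R t u) :
    Relation.ReflTransGen (Descent R) t u :=
  Relation.ReflTransGen.mono (fun _ _ => Or.inl) _ _ h

theorem ArgGT.descent {t u : Trm F} (h : ArgGT t u) : Relation.TransGen (Descent R) t u :=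
  Relation.TransGen.mono (fun _ _ => Or.inr) _ _ h

-- Reducing a subterm of `t` reduces `t`, and passing to an argument decreases the subterm, so the
-- subterms of `t` are handled by induction on `t` for reduction and then on the subterm.
theorem SN.acc_descent {t : Trm F} (ht : SN R t) : Acc (Function.swap (Descent R)) t := by
  suffices h : ∀ u, Subterm u t → Acc (Function.swap (Descent R)) u from h t (.refl t)
  induction ht with
  | intro t _ ih_red =>
    intro u
    induction u using wellFounded_swap_argSubBase.induction with
    | _ u ih_arg =>
      refine fun hu => ⟨u, fun v hv => ?_⟩
      rcases hv with hred | harg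
      · obtain ⟨t', ht', hv⟩ := hu.exists_red hred
        exact ih_red t' ht' v hv
      · exact ih_arg v harg (harg.subterm.trans hu)

end Descent

/-! ### Strong normalization of the elements of type interpretations -/

section Saturated

variable {F : Type} {R : Rules F} {I : Interp F}

/-- Every left-hand side of `R` is of the form `f l⃗`, expressed by its `head`. -/
def SymbolHeaded (R : Rules F) : Prop := ∀ l r, (l, r) ∈ R → ∃ f, l.head = .sym f

theorem IsRewriteSystem.symbolHeaded (h : IsRewriteSystem R) : SymbolHeaded R := by
  intro l r hlr
  obtain ⟨-, f, ls, hl⟩ := h (l, r) hlr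
  exact ⟨f, (congrArg Trm.head hl).trans (Trm.head_appList (.sym f) ls)⟩

/-- Terms `x t₁ … tₙ` with `x` a variable and strongly normalizing `tᵢ`. -/
inductive VarSpine (R : Rules F) : Trm F → Prop
  | var (n : ℕ) : VarSpine R (.var n)
  | app {t a : Trm F} : VarSpine R t → SN R a → VarSpine R (.app t a)

theorem VarSpine.head_ne_sym {t : Trm F} (ht : VarSpine R t) (f : F) : t.head ≠ .sym f := by
  induction ht with
  | var n => exact nofun
  | app _ _ ih => exact ih

theorem SymbolHeaded.not_varSpine_subst (hR : SymbolHeaded R) {l r : Trm F} (hlr : (l, r) ∈ R)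
    (σ : ℕ → Trm F) : ¬ VarSpine R (Trm.subst σ l) := fun h =>
  let ⟨f, hf⟩ := hR l r hlr
  h.head_ne_sym f (Trm.head_subst_of_head_eq_sym hf σ)

theorem SymbolHeaded.not_red_var (hR : SymbolHeaded R) (n : ℕ) (u : Trm F) :
    ¬ Red R (.var n) u := by
  generalize ht : Trm.var n = t
  intro h
  cases h with
  | rule σ hlr => exact hR.not_varSpine_subst hlr σ (ht ▸ .var n)
  | _ => cases ht

theorem VarSpine.red_app_cases (hR : SymbolHeaded R) {t a u : Trm F}
    (hta : VarSpine R (.app t a)) (h : Red R (.app t a) u) :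
    (∃ t', Red R t t' ∧ u = .app t' a) ∨ ∃ a', Red R a a' ∧ u = .app t a' := by
  generalize hs : Trm.app t a = s at h
  cases h with
  | beta A b c =>
    cases hs
    cases hta with | app hlam _ => cases hlam
  | rule σ hlr => exact absurd (hs ▸ hta) (hR.not_varSpine_subst hlr σ)
  | appL h => cases hs; exact .inl ⟨_, h, rfl⟩
  | appR h => cases hs; exact .inr ⟨_, h, rfl⟩
  | _ => cases hs

theorem VarSpine.red (hR : SymbolHeaded R) {t u : Trm F} (ht : VarSpine R t) (h : Red R t u) :
    VarSpine R u := by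
  induction ht generalizing u with
  | var n => exact absurd h (hR.not_red_var n u)
  | app ht ha ih =>
    rcases (VarSpine.app ht ha).red_app_cases hR h with ⟨t', htt', rfl⟩ | ⟨a', haa', rfl⟩
    · exact .app (ih htt') ha
    · exact .app ht (ha.inv haa')

theorem VarSpine.redStar (hR : SymbolHeaded R) {t u : Trm F} (ht : VarSpine R t)
    (h : RedStar R t u) : VarSpine R u := by
  induction h with
  | refl => exact ht
  | tail _ hr ih => exact ih.red hR hr

theorem VarSpine.sn (hR : SymbolHeaded R) {t : Trm F} (ht : VarSpine R t) : SN R t := by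
  induction ht with
  | var n => exact ⟨_, fun u h => absurd h (hR.not_red_var n u)⟩
  | @app t a ht ha ht_sn =>
    induction ht_sn generalizing a with
    | intro t _ ih_t =>
      induction ha with
      | intro a ha ih_a =>
        refine ⟨_, fun u hu => ?_⟩
        rcases (VarSpine.app ht ⟨a, ha⟩).red_app_cases hR hu with ⟨t', h, rfl⟩ | ⟨a', h, rfl⟩
        · exact ih_t t' h (ht.red hR h) ⟨a, ha⟩
        · exact ih_a a' h

/-- A set of strongly normalizing terms that contains every `x t⃗` with strongly normalizing `t⃗`.
Unlike `IsCompPred`, this passes from `I(A)` and the `I(B[x↦a])` to their product without comparing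
`I(B[x↦a])` and `I(B[x↦a'])` for `a → a'`, which would take confluence. -/
structure Saturated (R : Rules F) (S : Set (Trm F)) : Prop where
  sn : ∀ t ∈ S, SN R t
  varSpine : ∀ t, VarSpine R t → t ∈ S

theorem saturated_SNset (hR : SymbolHeaded R) : Saturated R (SNset R) :=
  ⟨fun _ h => h, fun _ h => h.sn hR⟩

theorem saturated_domD (hR : SymbolHeaded R) (I : Interp F) : Saturated R (domD R I) where
  sn _ h := h.1
  varSpine _ h := ⟨h.sn hR, fun _ _ hr => nomatch h.redStar hR hr⟩

theorem Saturated.arrow {S : Set (Trm F)} {B : Trm F → Set (Trm F)} (hS : Saturated R S)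
    (hB : ∀ a ∈ S, Saturated R (B a)) : Saturated R {t | ∀ a ∈ S, .app t a ∈ B a} where
  sn t ht :=
    have h0 : .var 0 ∈ S := hS.varSpine _ (.var 0)
    ((hB _ h0).sn _ (ht _ h0)).of_subterm (.appL (.refl t))
  varSpine _ ht a ha := (hB a ha).varSpine _ (.app ht (hS.sn a ha))

/-- `PiComponent R I X T`: the value at `T` of an interpretation fixed by `interpF` refers to its
value at `X`, because `T →* Πx:A.B` and `X` is `A` or `B[x↦a]` with `a ∈ I(A)`. -/
inductive PiComponent (R : Rules F) (I : Interp F) : Trm F → Trm F → Prop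
  | dom {T A B : Trm F} : RedStar R T (.pi A B) → PiComponent R I A T
  | cod {T A B a : Trm F} {S : Set (Trm F)} : RedStar R T (.pi A B) → S ∈ I A → a ∈ S →
      PiComponent R I (Trm.subst1 a B) T

/-- The restriction of `I` to the terms below which `PiComponent R I` is well-founded.
It is again a fixpoint, so the least fixpoint is included in it and can be studied by induction
along `PiComponent`. -/
def accRestrict (R : Rules F) (I : Interp F) : Interp F := fun T =>
  Part.assert (Acc (PiComponent R I) T) fun _ => I T

theorem mem_accRestrict {T : Trm F} {S : Set (Trm F)} :
    S ∈ accRestrict R I T ↔ Acc (PiComponent R I) T ∧ S ∈ I T := by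
  simp only [accRestrict, Part.mem_assert_iff, exists_prop]

theorem dom_accRestrict {T : Trm F} :
    (accRestrict R I T).Dom ↔ Acc (PiComponent R I) T ∧ (I T).Dom := by
  simp only [Part.dom_iff_mem, mem_accRestrict, exists_and_left]

theorem mem_domD_accRestrict {T : Trm F} :
    T ∈ domD R (accRestrict R I) ↔ Acc (PiComponent R I) T ∧ T ∈ domD R I := by
  constructor
  · rintro ⟨hsn, h⟩
    have hdom {A B} (hr : RedStar R T (.pi A B)) := dom_accRestrict.1 (h A B hr).1
    have hcod {A B} (hr : RedStar R T (.pi A B)) {S} (hS : S ∈ I A) {a} (ha : a ∈ S) :=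
      dom_accRestrict.1 ((h A B hr).2 S (mem_accRestrict.2 ⟨(hdom hr).1, hS⟩) a ha)
    refine ⟨⟨T, ?_⟩, hsn, fun A B hr => ⟨(hdom hr).2, fun S hS a ha => (hcod hr hS ha).2⟩⟩
    rintro _ (hr | ⟨hr, hS, ha⟩)
    · exact (hdom hr).1
    · exact (hcod hr hS ha).1
  · rintro ⟨hT, hsn, h⟩
    refine ⟨hsn, fun A B hr => ⟨dom_accRestrict.2 ⟨hT.inv (.dom hr), (h A B hr).1⟩, ?_⟩⟩
    intro S hS a ha
    have hS : S ∈ I A := (mem_accRestrict.1 hS).2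
    exact dom_accRestrict.2 ⟨hT.inv (.cod hr hS ha), (h A B hr).2 S hS a ha⟩

theorem piPart_accRestrict {T A B : Trm F} (hT : Acc (PiComponent R I) T)
    (hr : RedStar R T (.pi A B)) : piPart (accRestrict R I) A B = piPart I A B := by
  ext t
  constructor
  · intro h S hS a ha S' hS'
    exact h S (mem_accRestrict.2 ⟨hT.inv (.dom hr), hS⟩) a ha S'
      (mem_accRestrict.2 ⟨hT.inv (.cod hr hS ha), hS'⟩)
  · intro h S hS a ha S' hS'
    exact h S (mem_accRestrict.1 hS).2 a ha S' (mem_accRestrict.1 hS').2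

theorem interpF_congr {J : Interp F} {T : Trm F} (hdom : T ∈ domD R I ↔ T ∈ domD R J)
    (hpi : ∀ A B, RedStar R T (.pi A B) → piPart I A B = piPart J A B) :
    interpF R I T = interpF R J T := by
  refine Part.ext' hdom fun _ _ => ?_
  unfold interpF
  split_ifs with h
  · exact hpi _ _ h.choose_spec.choose_spec.1
  · rfl

theorem interpF_accRestrict (hI : interpF R I = I) :
    interpF R (accRestrict R I) = accRestrict R I := by
  funext T
  by_cases hT : Acc (PiComponent R I) T
  · calc interpF R (accRestrict R I) T
        = interpF R I T := interpF_congr (by rw [mem_domD_accRestrict, and_iff_right hT])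
          fun A B hr => piPart_accRestrict hT hr
      _ = I T := by rw [hI]
      _ = accRestrict R I T := (Part.assert_pos (f := fun _ => I T) hT).symm
  · have hdom : ¬ (interpF R (accRestrict R I) T).Dom := fun h => hT (mem_domD_accRestrict.1 h).1
    exact (Part.eq_none_iff'.2 hdom).trans (Part.assert_neg hT).symm

theorem IsLfpInterp.acc_piComponent (hI : IsLfpInterp (interpF R) I) {T : Trm F}
    {S : Set (Trm F)} (hS : S ∈ I T) : Acc (PiComponent R I) T :=
  (mem_accRestrict.1 (hI.2 _ (interpF_accRestrict hI.1) T S hS)).1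

theorem eq_SNset_or_eq_piPart_of_mem_interpF {T : Trm F} {S : Set (Trm F)}
    (h : S ∈ interpF R I T) :
    S = SNset R ∨ ∃ A B, RedStar R T (.pi A B) ∧ S = piPart I A B := by
  obtain ⟨_, rfl⟩ := h
  unfold interpF
  split_ifs with hp
  · exact .inr ⟨_, _, hp.choose_spec.choose_spec.1, rfl⟩
  · exact .inl rfl

theorem partMem_of_mem {T : Trm F} {S : Set (Trm F)} (hS : S ∈ I T) : partMem I T = S :=
  Set.ext fun _ => ⟨fun h => h S hS, fun h _ hS' => Part.mem_unique hS hS' ▸ h⟩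

theorem piPart_of_mem {A : Trm F} (B : Trm F) {S : Set (Trm F)} (hS : S ∈ I A) :
    piPart I A B = {t | ∀ a ∈ S, .app t a ∈ partMem I (Trm.subst1 a B)} :=
  Set.ext fun _ => ⟨fun h => h S hS, fun h _ hS' => Part.mem_unique hS hS' ▸ h⟩

theorem IsLfpInterp.saturated_of_mem (hI : IsLfpInterp (interpF R) I) (hR : SymbolHeaded R)
    {T : Trm F} {S : Set (Trm F)} (hS : S ∈ I T) : Saturated R S := by
  induction hI.acc_piComponent hS generalizing S with
  | intro T _ ih =>
    have hS' : S ∈ interpF R I T := by rwa [hI.1]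
    rcases eq_SNset_or_eq_piPart_of_mem_interpF hS' with rfl | ⟨A, B, hr, rfl⟩
    · exact saturated_SNset hR
    obtain ⟨-, hT⟩ : T ∈ domD R I := hS'.1
    obtain ⟨hA, hB⟩ := hT A B hr
    have hA := Part.get_mem hA
    rw [piPart_of_mem B hA]
    refine (ih A (.dom hr) hA).arrow fun a ha => ?_
    have hBa := Part.get_mem (hB _ hA a ha)
    rw [partMem_of_mem hBa]
    exact ih _ (.cod hr hA ha) hBa

theorem IsLfpInterp.saturated_partMem (hI : IsLfpInterp (interpF R) I) (hR : SymbolHeaded R)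
    {T : Trm F} (hT : T ∈ domD R I) : Saturated R (partMem I T) := by
  have hdom : (I T).Dom := hI.1 ▸ hT
  rw [partMem_of_mem (Part.get_mem hdom)]
  exact hI.saturated_of_mem hR (Part.get_mem hdom)

theorem IsLfpInterp.saturated_interp (hI : IsLfpInterp (interpF R) I) (hR : SymbolHeaded R)
    (T : Trm F) (σ : ℕ → Trm F) : Saturated R (interp R I T σ) := by
  induction T generalizing σ with
  | type | kind => exact saturated_domD hR I
  | pi A B ihA ihB =>
    rw [interp]
    split_ifs with _ h
    · exact (ihA σ).arrow fun a _ => ihB (Trm.scons a σ)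
    · exact hI.saturated_partMem hR h
    · exact saturated_SNset hR
  | _ =>
    rw [interp]
    split_ifs with h
    · exact hI.saturated_partMem hR h
    · exact saturated_SNset hR

/-- The terms `f t⃗` with `|t⃗| = arit(Θ_f)` and strongly normalizing `t⃗`. -/
def SNCalls (R : Rules F) (Θ : F → Trm F) : Set (Trm F) :=
  {t | ∃ (f : F) (ts : List (Trm F)), t = Trm.appList (.sym f) ts ∧
    ts.length = Trm.piArity (Θ f) ∧ ∀ a ∈ ts, SN R a}

theorem IsLfpInterp.CC_subset_SNCalls (hI : IsLfpInterp (interpF R) I) (hR : SymbolHeaded R)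
    (Θ sΘ : F → Trm F) : CC R Θ sΘ I ⊆ SNCalls R Θ := by
  rintro _ ⟨f, ts, rfl, hlen, -, -, hmodels⟩
  refine ⟨f, ts, rfl, hlen, fun a ha => ?_⟩
  obtain ⟨i, hi, rfl⟩ := List.getElem_of_mem (List.mem_reverse.2 ha)
  have hi' : i < (Trm.telescope (Θ f)).length := by
    rwa [Trm.length_telescope, ← hlen, ← List.length_reverse]
  have hmem := hmodels i _ (List.getElem?_eq_getElem hi')
  rw [mkSubst, List.getElem?_eq_getElem hi, Option.getD_some] at hmem
  exact (hI.saturated_interp hR _ _).sn _ hmem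

end Saturated

/-! ### Size-change matrices -/

namespace SCTe

instance : Fintype SCTe := ⟨{.minusOne, .zero, .infty}, by rintro (_ | _ | _) <;> simp⟩

theorem ext_iff {a b : SCTe} :
    a = b ↔ (a = .infty ↔ b = .infty) ∧ (a = .minusOne ↔ b = .minusOne) := by
  cases a <;> cases b <;> simp

theorem min_eq_infty {a b : SCTe} : a.min b = .infty ↔ a = .infty ∧ b = .infty := by
  cases a <;> cases b <;> simp [SCTe.min]

theorem min_eq_minusOne {a b : SCTe} : a.min b = .minusOne ↔ a = .minusOne ∨ b = .minusOne := by
  cases a <;> cases b <;> simp [SCTe.min]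

theorem comp_eq_infty {a b : SCTe} : a.comp b = .infty ↔ a = .infty ∨ b = .infty := by
  cases a <;> cases b <;> simp [comp]

theorem comp_eq_minusOne {a b : SCTe} :
    a.comp b = .minusOne ↔ a ≠ .infty ∧ b ≠ .infty ∧ (a = .minusOne ∨ b = .minusOne) := by
  cases a <;> cases b <;> simp [comp]

theorem foldr_min_eq_infty {l : List SCTe} :
    l.foldr SCTe.min .infty = .infty ↔ ∀ a ∈ l, a = .infty := by
  induction l with
  | nil => simp
  | cons a l ih => rw [List.foldr_cons, min_eq_infty, ih, List.forall_mem_cons]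

theorem foldr_min_eq_minusOne {l : List SCTe} :
    l.foldr SCTe.min .infty = .minusOne ↔ .minusOne ∈ l := by
  induction l with
  | nil => simp
  | cons a l ih => rw [List.foldr_cons, min_eq_minusOne, ih, List.mem_cons, eq_comm]

end SCTe

section SizeChange

variable {M N : ℕ → ℕ → SCTe} {d i j : ℕ}

theorem matComp_eq_infty :
    matComp d M N i j = .infty ↔ ∀ k < d, M i k = .infty ∨ N k j = .infty := by
  simp [matComp, SCTe.foldr_min_eq_infty, SCTe.comp_eq_infty]

theorem matComp_eq_minusOne :
    matComp d M N i j = .minusOne ↔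
      ∃ k < d, M i k ≠ .infty ∧ N k j ≠ .infty ∧ (M i k = .minusOne ∨ N k j = .minusOne) := by
  simp [matComp, SCTe.foldr_min_eq_minusOne, SCTe.comp_eq_minusOne]

theorem matComp_assoc (d e : ℕ) (M N P : ℕ → ℕ → SCTe) :
    matComp e (matComp d M N) P = matComp d M (matComp e N P) := by
  funext i j
  rw [SCTe.ext_iff]
  simp only [matComp_eq_infty, matComp_eq_minusOne, ne_eq]
  grind

theorem exists_of_matComp_ne_infty (h : matComp d M N i j ≠ .infty) :
    ∃ k, M i k ≠ .infty ∧ N k j ≠ .infty ∧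
      (matComp d M N i j = .minusOne → M i k = .minusOne ∨ N k j = .minusOne) := by
  by_cases hneg : matComp d M N i j = .minusOne
  · obtain ⟨k, -, hM, hN, hk⟩ := matComp_eq_minusOne.1 hneg
    exact ⟨k, hM, hN, fun _ => hk⟩
  · simp only [ne_eq, matComp_eq_infty, not_forall, not_or] at h
    obtain ⟨k, -, hM, hN⟩ := h
    exact ⟨k, hM, hN, fun h => absurd h hneg⟩

theorem finite_setOf_matrices_bounded (n : ℕ) :
    {M : ℕ → ℕ → SCTe | ∀ i j, M i j ≠ .infty → i < n ∧ j < n}.Finite := by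
  refine .of_finite_image (f := fun M (i j : Fin n) => M i j) (Set.toFinite _) ?_
  intro M hM N hN hMN
  funext i j
  by_cases hij : i < n ∧ j < n
  · exact congrFun₂ hMN ⟨i, hij.1⟩ ⟨j, hij.2⟩
  · rw [not_imp_comm.1 (hM i j) hij, not_imp_comm.1 (hN i j) hij]

/-- The product `m i ⬝ m (i + 1) ⬝ … ⬝ m (j - 1)`, where `d k` is the dimension between
`m (k - 1)` and `m k`. It is meaningful for `i < j` only, there being no unit matrix. -/
def pathProd (d : ℕ → ℕ) (m : ℕ → ℕ → ℕ → SCTe) (i : ℕ) : ℕ → ℕ → ℕ → SCTe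
  | 0 => m i
  | j + 1 => if i < j then matComp (d j) (pathProd d m i j) (m j) else m i

theorem pathProd_self_succ (d : ℕ → ℕ) (m : ℕ → ℕ → ℕ → SCTe) (i : ℕ) :
    pathProd d m i (i + 1) = m i :=
  if_neg (lt_irrefl i)

theorem pathProd_succ (d : ℕ → ℕ) (m : ℕ → ℕ → ℕ → SCTe) (hij : i < j) :
    pathProd d m i (j + 1) = matComp (d j) (pathProd d m i j) (m j) :=
  if_pos hij

theorem matComp_pathProd (d : ℕ → ℕ) (m : ℕ → ℕ → ℕ → SCTe) {k : ℕ} (hij : i < j)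
    (hjk : j < k) : matComp (d j) (pathProd d m i j) (pathProd d m j k) = pathProd d m i k := by
  induction k, Nat.succ_le_of_lt hjk using Nat.le_induction with
  | base => rw [Nat.succ_eq_add_one, pathProd_self_succ, pathProd_succ d m hij]
  | succ k hjk' ih =>
    have hjk' : j < k := hjk'
    rw [pathProd_succ d m hjk', ← matComp_assoc, ih hjk', pathProd_succ d m (hij.trans hjk')]

variable {α : Type*} {r : α → α → Prop}

/-- `M` is a sound description of the size changes from the list `ts` to the list `us`, the sizes
being compared by the descent relation `r`. -/
def SizeChange (r : α → α → Prop) (M : ℕ → ℕ → SCTe) (ts us : List α) : Prop :=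
  ∀ i j, M i j ≠ .infty → ∃ a b, ts[i]? = some a ∧ us[j]? = some b ∧
    Relation.ReflTransGen r a b ∧ (M i j = .minusOne → Relation.TransGen r a b)

theorem SizeChange.lt_length {ts us : List α} (h : SizeChange r M ts us) (hij : M i j ≠ .infty) :
    i < ts.length ∧ j < us.length := by
  obtain ⟨_, _, hi, hj, -⟩ := h i j hij
  exact ⟨(List.getElem?_eq_some_iff.1 hi).1, (List.getElem?_eq_some_iff.1 hj).1⟩

theorem SizeChange.matComp {ts us vs : List α} (hM : SizeChange r M ts us)
    (hN : SizeChange r N us vs) (d : ℕ) : SizeChange r (matComp d M N) ts vs := by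
  intro i j hij
  obtain ⟨k, hik, hkj, hneg⟩ := exists_of_matComp_ne_infty hij
  obtain ⟨a, b, ha, hb, hab, hab'⟩ := hM i k hik
  obtain ⟨b', c, hb', hc, hbc, hbc'⟩ := hN k j hkj
  obtain rfl : b = b' := Option.some_injective _ (hb.symm.trans hb')
  refine ⟨a, c, ha, hc, hab.trans hbc, fun h => ?_⟩
  rcases hneg h with h | h
  · exact (hab' h).trans_left hbc
  · exact (hbc' h).trans_right hab

theorem sizeChange_pathProd (d : ℕ → ℕ) {m : ℕ → ℕ → ℕ → SCTe} {ts : ℕ → List α}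
    (h : ∀ n, SizeChange r (m n) (ts n) (ts (n + 1))) (hij : i < j) :
    SizeChange r (pathProd d m i j) (ts i) (ts j) := by
  induction j, Nat.succ_le_of_lt hij using Nat.le_induction with
  | base => exact (pathProd_self_succ d m i).symm ▸ h i
  | succ j hij' ih => exact pathProd_succ d m hij' ▸ (ih hij').matComp (h j) (d j)

theorem exists_not_acc_of_sizeChange {p : ℕ} (hp : M p p = .minusOne) {ts : ℕ → List α}
    (h : ∀ n, SizeChange r M (ts n) (ts (n + 1))) :
    ∃ a ∈ ts 0, ¬ Acc (Function.swap r) a := by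
  choose x y hx hy _ hlt using fun n => h n p p (by simp [hp])
  have hyx : ∀ n, y n = x (n + 1) := fun n =>
    Option.some_injective _ ((hy n).symm.trans (hx (n + 1)))
  refine ⟨x 0, List.mem_of_getElem? (hx 0), fun hacc => ?_⟩
  refine not_acc_iff_exists_descending_chain.2 ⟨x, rfl, fun n => ?_⟩ hacc.transGen
  exact Relation.transGen_swap.2 (hyx n ▸ hlt n hp)

end SizeChange

/-! ### Size-change termination of sequences of argument lists -/

/-- Ramsey's theorem for pairs of natural numbers. Along an ultrafilter, `col i j` is eventually a
constant `lim i`, and `lim i` is eventually a constant `c`. -/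
theorem exists_strictMono_forall_lt_eq {κ : Type*} (col : ℕ → ℕ → κ) {K : Set κ} (hK : K.Finite)
    (hcol : ∀ i j, i < j → col i j ∈ K) :
    ∃ (φ : ℕ → ℕ) (c : κ), StrictMono φ ∧ ∀ i j, i < j → col (φ i) (φ j) = c := by
  let U : Ultrafilter ℕ := Filter.hyperfilter ℕ
  have hgt : ∀ i, ∀ᶠ j in U, i < j := fun i =>
    (Filter.eventually_gt_atTop i).filter_mono Nat.hyperfilter_le_atTop
  have exists_lim : ∀ g : ℕ → κ, (∀ᶠ j in U, g j ∈ K) → ∃ c ∈ K, ∀ᶠ j in U, g j = c := fun g hg =>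
    (Ultrafilter.eventually_exists_mem_iff hK).1 (hg.mono fun j hj => ⟨g j, hj, rfl⟩)
  choose lim hlimK hlim using fun i => exists_lim (col i) ((hgt i).mono (hcol i))
  obtain ⟨c, -, hc⟩ := exists_lim lim (.of_forall hlimK)
  obtain ⟨φ, -, hφ⟩ := exists_seq_of_forall_finset_exists (fun i => lim i = c)
    (fun i j => i < j ∧ col i j = c) fun s hs => by
      have hs' : ∀ᶠ j in U, ∀ i ∈ s, i < j ∧ col i j = c :=
        (Filter.eventually_all_finset s).2 fun i hi => (hgt i).and (hs i hi ▸ hlim i)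
      exact (hc.and hs').exists
  exact ⟨φ, c, fun i j hij => (hφ i j hij).1, fun i j hij => (hφ i j hij).2⟩

section SCT

variable {F : Type} {R : Rules F} {Θ : F → Trm F}

theorem TCEdge.defined_left {f g : F} {M : ℕ → ℕ → SCTe} (h : TCEdge R Θ f g M) :
    Defined R f := by
  induction h with
  | base hdp => exact let ⟨_, r, hr, _⟩ := hdp; ⟨_, r, hr⟩
  | comp _ _ ih _ => exact ih

theorem tcEdge_pathProd {f : ℕ → F} {m : ℕ → ℕ → ℕ → SCTe}
    (h : ∀ n, TCEdge R Θ (f n) (f (n + 1)) (m n)) {i j : ℕ} (hij : i < j) :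
    TCEdge R Θ (f i) (f j) (pathProd (fun n => Trm.piArity (Θ (f n))) m i j) := by
  induction j, Nat.succ_le_of_lt hij using Nat.le_induction with
  | base => exact (pathProd_self_succ _ m i).symm ▸ h i
  | succ j hij' ih => exact pathProd_succ _ m hij' ▸ (ih hij').comp (h j)

theorem SCT.exists_not_acc (hsct : SCT R Θ) (hfin : {f | Defined R f}.Finite) {α : Type*}
    {r : α → α → Prop} {f : ℕ → F} {ts : ℕ → List α} {m : ℕ → ℕ → ℕ → SCTe}
    (hlen : ∀ n, (ts n).length = Trm.piArity (Θ (f n)))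
    (hedge : ∀ n, TCEdge R Θ (f n) (f (n + 1)) (m n))
    (hsize : ∀ n, SizeChange r (m n) (ts n) (ts (n + 1))) :
    ∃ n, ∃ a ∈ ts n, ¬ Acc (Function.swap r) a := by
  have hdef : ∀ n, Defined R (f n) := fun n => (hedge n).defined_left
  obtain ⟨b, hb⟩ := (hfin.image fun g => Trm.piArity (Θ g)).bddAbove
  have hlen_le : ∀ n, (ts n).length ≤ b := fun n => hlen n ▸ hb ⟨f n, hdef n, rfl⟩
  let P := pathProd (fun n => Trm.piArity (Θ (f n))) m
  have hP_edge : ∀ i j, i < j → TCEdge R Θ (f i) (f j) (P i j) := fun _ _ =>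
    tcEdge_pathProd hedge
  have hP_comp : ∀ i j k, i < j → j < k →
      matComp (Trm.piArity (Θ (f j))) (P i j) (P j k) = P i k := fun _ _ _ =>
    matComp_pathProd _ m
  have hP_size : ∀ i j, i < j → SizeChange r (P i j) (ts i) (ts j) := fun _ _ =>
    sizeChange_pathProd _ hsize
  have hP_bdd : ∀ i j, i < j → ∀ p q, P i j p q ≠ .infty → p < b ∧ q < b := fun i j hij p q hpq =>
    (hP_size i j hij).lt_length hpq |>.imp (·.trans_le (hlen_le i)) (·.trans_le (hlen_le j))
  obtain ⟨φ, ⟨g, M⟩, hφ, hcol⟩ := exists_strictMono_forall_lt_eq (fun i j => (f i, P i j))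
    (hfin.prod (finite_setOf_matrices_bounded b)) fun i j hij => ⟨hdef i, hP_bdd i j hij⟩
  have hf : ∀ n, f (φ n) = g := fun n => congrArg Prod.fst (hcol n (n + 1) n.lt_succ_self)
  have hM : ∀ i j, i < j → P (φ i) (φ j) = M := fun i j hij => congrArg Prod.snd (hcol i j hij)
  have hloop : TCEdge R Θ g g M := by
    have h := hP_edge _ _ (hφ zero_lt_one)
    rwa [hf, hf, hM 0 1 zero_lt_one] at h
  have hidem : matComp (Trm.piArity (Θ g)) M M = M := by
    have h := hP_comp _ _ _ (hφ zero_lt_one) (hφ one_lt_two)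
    rwa [hf, hM 0 1 zero_lt_one, hM 1 2 one_lt_two, hM 0 2 zero_lt_two] at h
  obtain ⟨p, -, hp⟩ := hsct g M hloop hidem
  exact ⟨φ 0, exists_not_acc_of_sizeChange hp (ts := fun n => ts (φ n)) fun n =>
    hM n (n + 1) n.lt_succ_self ▸ hP_size _ _ (hφ n.lt_succ_self)⟩

end SCT

/-! ### Calls -/

section Call

variable {F : Type} {R : Rules F} {Θ : F → Trm F}

theorem exists_of_dpMatrix_ne_infty {ls ms : List (Trm F)} {i j : ℕ}
    (h : dpMatrix ls ms i j ≠ .infty) :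
    ∃ l m, ls[i]? = some l ∧ ms[j]? = some m ∧
      (ArgGT l m ∨ l = m ∧ dpMatrix ls ms i j ≠ .minusOne) := by
  unfold dpMatrix at h ⊢
  split at h
  · next l m hl hm =>
    refine ⟨l, m, hl, hm, ?_⟩
    by_cases hgt : ArgGT l m
    · exact .inl hgt
    · simp_all
  · exact absurd rfl h

theorem sizeChange_dpMatrix {ts us ls ms : List (Trm F)} (σ : ℕ → Trm F)
    (hl : ∀ (k : ℕ) (l : Trm F), ls[k]? = some l →
      ∃ t, ts[k]? = some t ∧ RedStar R t (Trm.subst σ l))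
    (hm : ∀ (k : ℕ) (m : Trm F), ms[k]? = some m → us[k]? = some (Trm.subst σ m)) :
    SizeChange (Descent R) (dpMatrix ls ms) ts us := by
  intro i j hij
  obtain ⟨l, m, hli, hmj, hlm⟩ := exists_of_dpMatrix_ne_infty hij
  obtain ⟨t, hti, htl⟩ := hl i l hli
  refine ⟨t, Trm.subst σ m, hti, hm j m hmj, ?_⟩
  rcases hlm with hgt | ⟨rfl, hne⟩
  · have h := (hgt.subst σ).descent.trans_right htl.descent
    exact ⟨h.to_reflTransGen, fun _ => h⟩
  · exact ⟨htl.descent, fun h => absurd h hne⟩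

theorem exists_redStar_of_getElem?_append_cons {pre post : List (Trm F)} {a b u : Trm F} {k : ℕ}
    (hab : Red R a b) (hu : (pre ++ b :: post)[k]? = some u) :
    ∃ t, (pre ++ a :: post)[k]? = some t ∧ RedStar R t u := by
  by_cases hk : k = pre.length
  · subst hk
    obtain rfl : b = u := by simpa using hu
    exact ⟨a, by simp, .single hab⟩
  · refine ⟨u, ?_, .refl⟩
    grind

theorem exists_args_of_argRed_star {f : F} {ts : List (Trm F)} {v : Trm F}
    (h : Relation.ReflTransGen (ArgRed R) (Trm.appList (.sym f) ts) v) :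
    ∃ vs : List (Trm F), v = Trm.appList (.sym f) vs ∧
      ∀ (k : ℕ) (u : Trm F), vs[k]? = some u → ∃ t, ts[k]? = some t ∧ RedStar R t u := by
  induction h with
  | refl => exact ⟨ts, rfl, fun _ t ht => ⟨t, ht, .refl⟩⟩
  | tail _ hstep ih =>
    obtain ⟨vs, rfl, hvs⟩ := ih
    obtain ⟨g, pre, post, a, b, hab, heq, rfl⟩ := hstep
    obtain ⟨rfl, rfl⟩ := Trm.appList_sym_inj.1 heq
    refine ⟨_, rfl, fun k u hu => ?_⟩
    obtain ⟨t, ht, htu⟩ := exists_redStar_of_getElem?_append_cons hab hu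
    obtain ⟨s, hs, hst⟩ := hvs k t ht
    exact ⟨s, hs, hst.trans htu⟩

/-- The call relation `→arg* · >ₛ` on arbitrary terms; `CallRel` is its restriction to `ℂ`. -/
def Call (R : Rules F) (t u : Trm F) : Prop :=
  ∃ v, Relation.ReflTransGen (ArgRed R) t v ∧ GTsub R v u

theorem Call.exists_sizeChange {f g : F} {ts us : List (Trm F)}
    (h : Call R (Trm.appList (.sym f) ts) (Trm.appList (.sym g) us)) (Θ : F → Trm F) :
    ∃ M, TCEdge R Θ f g M ∧ SizeChange (Descent R) M ts us := by
  obtain ⟨v, hv, f', g', vs', us', ls, ms, σ, rfl, hu, hdp, hlen, -, hl, hm⟩ := h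
  obtain ⟨vs, heq, hvs⟩ := exists_args_of_argRed_star hv
  obtain ⟨rfl, rfl⟩ := Trm.appList_sym_inj.1 heq
  obtain ⟨rfl, rfl⟩ := Trm.appList_sym_inj.1 hu
  refine ⟨dpMatrix ls ms, .base hdp, sizeChange_dpMatrix σ (fun k l hk => ?_) hm⟩
  have hk' : k < vs'.length := (List.getElem?_eq_some_iff.1 hk).1.trans_le hlen
  obtain ⟨t, ht, htv⟩ := hvs k _ (List.getElem?_eq_getElem hk')
  exact ⟨t, ht, htv.trans (hl k _ l (List.getElem?_eq_getElem hk') hk)⟩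

theorem sct_call_terminates_general (hfin : {f | Defined R f}.Finite) (hsct : SCT R Θ) :
    (SNCalls R Θ).WellFoundedOn fun u t => Call R t u := by
  rw [Set.wellFoundedOn_iff, wellFounded_iff_isEmpty_descending_chain]
  refine ⟨fun ⟨t, ht⟩ => ?_⟩
  choose f ts hts hlen hsn using fun n => (ht n).2.2
  have hcall : ∀ n, Call R (.appList (.sym (f n)) (ts n))
      (.appList (.sym (f (n + 1))) (ts (n + 1))) := fun n => hts n ▸ hts (n + 1) ▸ (ht n).1
  choose m hedge hsize using fun n => (hcall n).exists_sizeChange Θ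
  obtain ⟨n, a, ha, hacc⟩ := hsct.exists_not_acc hfin hlen hedge hsize
  exact hacc (hsn n a ha).acc_descent

end Call

/-- Lemma 16 of the paper. If the set `F` of function symbols is finite
and `R` is size-change terminating, then the call relation `≻̃` terminates on `ℂ`. -/
theorem sct_call_terminates {F : Type} [Finite F] (R : Rules F) (Θ sΘ : F → Trm F)
    (hRS : IsRewriteSystem R)
    (calI : Interp F) (hlfp : IsLfpInterp (interpF R) calI)
    (hsct : SCT R Θ) :
    WellFounded (fun u t => CallRel R Θ sΘ calI t u) := by
  have hsub : CC R Θ sΘ calI ⊆ SNCalls R Θ := hlfp.CC_subset_SNCalls hRS.symbolHeaded Θ sΘ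
  exact Subrelation.wf (fun ⟨ht, hu, hcall⟩ => ⟨hcall, hsub hu, hsub ht⟩)
    (Set.wellFoundedOn_iff.1 (sct_call_terminates_general (Set.toFinite _) hsct))
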